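/- arXiv:1502.02799 — 2 statements merged into one kernel-verified Lean document; each statement's English description precedes it below -/
import Mathlib

section
/- Let V ⊆ 𝒜 and Σ be a CNF theory. If ren(Σ,V) is a Horn theory, then ren(res^n_Σ, V) is a Horn theory for every n ≥ 0. -/
variable {α : Type*} [Fintype α] [DecidableEq α]

/-- A clause (or term): a finite set of literals, where a literal is an atom
paired with a polarity (`true` = positive occurrence, `false` = negated). -/
abbrev Clause (α : Type*) := Finset (α × Bool)

/-- A finite set of literals is a legal clause/term if it contains no
complementary pair of literals. -/
def IsClause (c : Clause α) : Prop := ∀ p : α, ¬((p, true) ∈ c ∧ (p, false) ∈ c)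

instance : DecidablePred (IsClause (α := α)) := fun c =>
  decidable_of_iff (∀ p : α, ¬((p, true) ∈ c ∧ (p, false) ∈ c)) Iff.rfl

/-- The atoms occurring in a clause/term. -/
def varsC (c : Clause α) : Finset α := c.image Prod.fst

/-- The atoms occurring positively in a clause/term. -/
def posC (c : Clause α) : Finset α := (c.filter fun l => l.2 = true).image Prod.fst

/-- The atoms occurring negatively in a clause/term. -/
def negC (c : Clause α) : Finset α := (c.filter fun l => l.2 = false).image Prod.fst

/-- The resolvent of two clauses on atom `p`. -/
def res (c c' : Clause α) (p : α) : Clause α :=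
  (c ∪ c') \ ({(p, true), (p, false)} : Finset (α × Bool))

/-- `c` and `c'` are resolvable on atom `p`: `p` occurs in one of them and `¬p` in
the other, and the resolvent contains no complementary pair of literals. -/
def ResolvableOn (c c' : Clause α) (p : α) : Prop :=
  ((p, true) ∈ c ∧ (p, false) ∈ c' ∨ (p, false) ∈ c ∧ (p, true) ∈ c') ∧ IsClause (res c c' p)

/-- Renaming of a literal: flip the polarity of atoms in `V`. -/
def renLit (V : Finset α) (l : α × Bool) : α × Bool := if l.1 ∈ V then (l.1, !l.2) else l

/-- Renaming of a clause w.r.t. the atoms in `V`. -/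
def renClause (V : Finset α) (c : Clause α) : Clause α := c.image (renLit V)

/-- Renaming of a CNF theory w.r.t. the atoms in `V`. -/
def renTheory (V : Finset α) (T : Finset (Clause α)) : Finset (Clause α) := T.image (renClause V)

/-- A Horn clause: at most one positive literal. -/
def HornClause (c : Clause α) : Prop := (posC c).card ≤ 1

/-- A Horn theory: a finite set of Horn clauses. -/
def IsHornTheory (T : Finset (Clause α)) : Prop := ∀ c ∈ T, HornClause c

/-- A Krom theory: each clause contains at most 2 literals. -/
def IsKromTheory (T : Finset (Clause α)) : Prop := ∀ c ∈ T, c.card ≤ 2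

/-- `T` is Horn renamable: some renaming of `T` is a Horn theory. -/
def IsRenHorn (T : Finset (Clause α)) : Prop := ∃ V : Finset α, IsHornTheory (renTheory V T)

/-- The QH-conditions for sets of atoms `Q`, `H` and a clause `c`. -/
def QHcond (Q H : Finset α) (c : Clause α) : Prop :=
  (varsC c ∩ Q).card ≤ 2 ∧ (posC c ∩ H).card ≤ 1 ∧
    ((posC c ∩ H).card = 1 → varsC c ∩ Q = ∅)

/-- The atoms occurring in a CNF theory. -/
def varsT (T : Finset (Clause α)) : Finset α := T.sup varsC

/-- `T` has a QH-partition: a partition `{Q, H}` of its atoms satisfying the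
QH-conditions for each of its clauses. -/
def HasQHPartition (T : Finset (Clause α)) : Prop :=
  ∃ Q H : Finset α, Q ∩ H = ∅ ∧ Q ∪ H = varsT T ∧ ∀ c ∈ T, QHcond Q H c

/-- `T` is q-Horn: some renaming of `T` has a QH-partition. -/
def IsQHorn (T : Finset (Clause α)) : Prop := ∃ V : Finset α, HasQHPartition (renTheory V T)

/-- Satisfaction of a literal by an interpretation (a set of atoms). -/
def litSat (I : Set α) (l : α × Bool) : Prop := if l.2 then l.1 ∈ I else l.1 ∉ I

/-- Satisfaction of a clause (read disjunctively). -/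
def clauseSat (I : Set α) (c : Clause α) : Prop := ∃ l ∈ c, litSat I l

/-- Satisfaction of a term (read conjunctively). -/
def termSat (I : Set α) (t : Clause α) : Prop := ∀ l ∈ t, litSat I l

/-- Satisfaction of a CNF theory. -/
def cnfSat (I : Set α) (T : Finset (Clause α)) : Prop := ∀ c ∈ T, clauseSat I c

/-- One step of the resolution closure. -/
def resStep (S : Set (Clause α)) : Set (Clause α) :=
  S ∪ {d | ∃ c ∈ S, ∃ c' ∈ S, ∃ p : α, ResolvableOn c c' p ∧ d = res c c' p}

/-- The iterated resolution closure `res^n_T`. -/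
def resIter (T : Finset (Clause α)) : ℕ → Set (Clause α)
  | 0 => (↑T : Set (Clause α))
  | n + 1 => resStep (resIter T n)

/-- Propositional formulas over atoms `α`. -/
inductive PropForm (α : Type*) where
  | var : α → PropForm α
  | tru : PropForm α
  | fls : PropForm α
  | neg : PropForm α → PropForm α
  | conj : PropForm α → PropForm α → PropForm α
  | disj : PropForm α → PropForm α → PropForm α

namespace PropForm

/-- Satisfaction of a formula by an interpretation. -/
def Sat (I : Set α) : PropForm α → Prop
  | var p => p ∈ I
  | tru => True
  | fls => False
  | neg φ => ¬ Sat I φ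
  | conj φ ψ => Sat I φ ∧ Sat I ψ
  | disj φ ψ => Sat I φ ∨ Sat I ψ

/-- Logical equivalence: same models. -/
def equivalent (φ ψ : PropForm α) : Prop := ∀ I : Set α, Sat I φ ↔ Sat I ψ

/-- Entailment: every model of `φ` is a model of `ψ`. -/
def entails (φ ψ : PropForm α) : Prop := ∀ I : Set α, Sat I φ → Sat I ψ

/-- The atoms occurring in a formula. -/
def vars : PropForm α → Finset α
  | var p => {p}
  | tru => ∅
  | fls => ∅
  | neg φ => vars φ
  | conj φ ψ => vars φ ∪ vars ψ
  | disj φ ψ => vars φ ∪ vars ψ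

/-- Substitution of the formula `χ` for the atom `p`. -/
def subst (p : α) (χ : PropForm α) : PropForm α → PropForm α
  | var q => if q = p then χ else var q
  | tru => tru
  | fls => fls
  | neg φ => neg (subst p χ φ)
  | conj φ ψ => conj (subst p χ φ) (subst p χ ψ)
  | disj φ ψ => disj (subst p χ φ) (subst p χ ψ)

/-- Forgetting a single atom: `Forget(φ, {p}) = φ[p/⊤] ∨ φ[p/⊥]`. -/
def forget1 (φ : PropForm α) (p : α) : PropForm α := disj (subst p tru φ) (subst p fls φ)

/-- Forgetting a set of atoms (presented as a list), one atom at a time: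
`Forget(φ, ∅) = φ` and `Forget(φ, V ∪ {p}) = Forget(Forget(φ, {p}), V)`. -/
def Forget : PropForm α → List α → PropForm α
  | φ, [] => φ
  | φ, p :: V => Forget (forget1 φ p) V

/-- Renaming of a formula: replace each occurrence of an atom `p ∈ V` by `¬p`. -/
def renForm (V : Finset α) : PropForm α → PropForm α
  | var p => if p ∈ V then neg (var p) else var p
  | tru => tru
  | fls => fls
  | neg φ => neg (renForm V φ)
  | conj φ ψ => conj (renForm V φ) (renForm V ψ)
  | disj φ ψ => disj (renForm V φ) (renForm V ψ)

/-- `φ` is irrelevant to the atoms in `V`: it is equivalent to a formula not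
mentioning any atom of `V`. -/
def IR (φ : PropForm α) (V : List α) : Prop :=
  ∃ φ' : PropForm α, equivalent φ φ' ∧ ∀ p ∈ V, p ∉ vars φ'

end PropForm

/-- The formula corresponding to a literal. -/
def litToForm (l : α × Bool) : PropForm α :=
  if l.2 then PropForm.var l.1 else PropForm.neg (PropForm.var l.1)

/-- The disjunction of the literals of a clause. -/
noncomputable def clauseToForm (c : Clause α) : PropForm α :=
  c.toList.foldr (fun l φ => PropForm.disj (litToForm l) φ) PropForm.fls

/-- The conjunction of the clauses of a CNF theory. -/
noncomputable def cnfToForm (T : Finset (Clause α)) : PropForm α :=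
  T.toList.foldr (fun c φ => PropForm.conj (clauseToForm c) φ) PropForm.tru

/-- `φ` is Horn expressible. -/
def HornExpressible (φ : PropForm α) : Prop :=
  ∃ T : Finset (Clause α), (∀ c ∈ T, IsClause c) ∧ IsHornTheory T ∧
    PropForm.equivalent φ (cnfToForm T)

/-- `φ` is Krom expressible. -/
def KromExpressible (φ : PropForm α) : Prop :=
  ∃ T : Finset (Clause α), (∀ c ∈ T, IsClause c) ∧ IsKromTheory T ∧
    PropForm.equivalent φ (cnfToForm T)

/-- `φ` is renamable-Horn expressible. -/
def RenHornExpressible (φ : PropForm α) : Prop :=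
  ∃ T : Finset (Clause α), (∀ c ∈ T, IsClause c) ∧ IsRenHorn T ∧
    PropForm.equivalent φ (cnfToForm T)

/-- `φ` is q-Horn expressible. -/
def QHornExpressible (φ : PropForm α) : Prop :=
  ∃ T : Finset (Clause α), (∀ c ∈ T, IsClause c) ∧ IsQHorn T ∧
    PropForm.equivalent φ (cnfToForm T)

/-- A formula entails a clause. -/
def EntailsClause (φ : PropForm α) (c : Clause α) : Prop :=
  ∀ I : Set α, PropForm.Sat I φ → clauseSat I c

/-- A prime implicate of a formula. -/
def IsPrimeImplicate (φ : PropForm α) (c : Clause α) : Prop :=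
  IsClause c ∧ EntailsClause φ c ∧ ∀ c' ⊂ c, ¬ EntailsClause φ c'

/-- A term entails a formula. -/
def TermEntails (t : Clause α) (φ : PropForm α) : Prop :=
  ∀ I : Set α, termSat I t → PropForm.Sat I φ

/-- A prime implicant of a formula. -/
def IsPrimeImplicant (φ : PropForm α) (t : Clause α) : Prop :=
  IsClause t ∧ TermEntails t φ ∧ ∀ t' ⊂ t, ¬ TermEntails t' φ

/-- A CNF theory entails a clause. -/
def TheoryEntailsClause (T : Finset (Clause α)) (c : Clause α) : Prop :=
  ∀ I : Set α, cnfSat I T → clauseSat I c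

/-- A prime implicate of a CNF theory. -/
def IsPrimeImplicateT (T : Finset (Clause α)) (c : Clause α) : Prop :=
  IsClause c ∧ TheoryEntailsClause T c ∧ ∀ c' ⊂ c, ¬ TheoryEntailsClause T c'

/-- The set of prime implicates of a CNF theory, as a finite theory. -/
noncomputable def PI (T : Finset (Clause α)) : Finset (Clause α) :=
  (Set.toFinite {c : Clause α | IsPrimeImplicateT T c}).toFinset

/-- Strong unfolding of a CNF theory w.r.t. an atom `p`: keep the clauses not
mentioning `p`, and replace the clauses containing the positive literal `p` by all
their resolvents with clauses containing `¬p`; clauses containing `¬p` are removed. -/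
def unfold1 (T : Finset (Clause α)) (p : α) : Finset (Clause α) :=
  T.filter (fun c => (p, true) ∉ c ∧ (p, false) ∉ c) ∪
    ((T ×ˢ T).filter fun cc =>
        (p, true) ∈ cc.1 ∧ (p, false) ∈ cc.2 ∧ IsClause (res cc.1 cc.2 p)).image
      fun cc => res cc.1 cc.2 p

/-- Iterated strong unfolding w.r.t. a set of atoms (presented as a list):
`unfold(T, ∅) = T` and `unfold(T, V ∪ {p}) = unfold(unfold(T, p), V)`. -/
def unfoldList (T : Finset (Clause α)) : List α → Finset (Clause α)
  | [] => T
  | p :: V => unfoldList (unfold1 T p) V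

/-!
Renaming is an involutive change of polarities, so it preserves complementary pairs and commutes
with resolution; hence it maps `res^n_Σ` into `res^n` of the renamed theory. This reduces the
claim to Horn theories, which resolution preserves: two clauses with at most one positive literal
each have at most two between them, and resolving on `p` removes one of these.
-/

section Renaming

omit [Fintype α]

theorem renLit_fst (V : Finset α) (l : α × Bool) : (renLit V l).1 = l.1 := by
  unfold renLit
  split_ifs <;> rfl

theorem renLit_involutive (V : Finset α) : Function.Involutive (renLit V) := by
  rintro ⟨p, b⟩
  by_cases hp : p ∈ V <;> simp [renLit, hp]

theorem mem_renClause {V : Finset α} {c : Clause α} {l : α × Bool} :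
    l ∈ renClause V c ↔ renLit V l ∈ c := by
  have h := (renLit_involutive V).injective.mem_finset_image (s := c) (a := renLit V l)
  rwa [renLit_involutive V l] at h

theorem mem_res {c c' : Clause α} {p : α} {l : α × Bool} :
    l ∈ res c c' p ↔ (l ∈ c ∨ l ∈ c') ∧ l.1 ≠ p := by
  rcases l with ⟨q, _ | _⟩ <;> simp [res]

theorem renClause_res (V : Finset α) (c c' : Clause α) (p : α) :
    renClause V (res c c' p) = res (renClause V c) (renClause V c') p := by
  ext l
  simp only [mem_renClause, mem_res, renLit_fst]

theorem isClause_renClause {V : Finset α} {c : Clause α} :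
    IsClause (renClause V c) ↔ IsClause c := by
  refine forall_congr' fun p => ?_
  by_cases hp : p ∈ V <;> simp [mem_renClause, renLit, hp, imp_not_comm]

theorem resolvableOn_renClause {V : Finset α} {c c' : Clause α} {p : α} :
    ResolvableOn (renClause V c) (renClause V c') p ↔ ResolvableOn c c' p := by
  rw [ResolvableOn, ResolvableOn, ← renClause_res, isClause_renClause]
  by_cases hp : p ∈ V <;> simp [mem_renClause, renLit, hp, or_comm]

theorem mapsTo_renClause_resStep {V : Finset α} {T T' : Set (Clause α)}
    (hTT' : Set.MapsTo (renClause V) T T') :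
    Set.MapsTo (renClause V) (resStep T) (resStep T') := by
  rintro _ (hd | ⟨c, hc, c', hc', p, hres, rfl⟩)
  · exact Or.inl (hTT' hd)
  · exact Or.inr ⟨_, hTT' hc, _, hTT' hc', p, resolvableOn_renClause.2 hres,
      renClause_res V c c' p⟩

theorem mapsTo_renClause_resIter (V : Finset α) (T : Finset (Clause α)) (n : ℕ) :
    Set.MapsTo (renClause V) (resIter T n) (resIter (renTheory V T) n) := by
  induction n with
  | zero => exact fun _ hc => Finset.mem_image_of_mem _ hc
  | succ n ih => exact mapsTo_renClause_resStep ih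

end Renaming

section Horn

omit [Fintype α]

theorem mem_posC {c : Clause α} {p : α} : p ∈ posC c ↔ (p, true) ∈ c := by
  simp [posC]

theorem posC_res (c c' : Clause α) (p : α) :
    posC (res c c' p) = (posC c ∪ posC c').erase p := by
  ext q
  simp only [mem_posC, mem_res, Finset.mem_erase, Finset.mem_union, and_comm]

theorem ResolvableOn.mem_posC_union {c c' : Clause α} {p : α} (h : ResolvableOn c c' p) :
    p ∈ posC c ∪ posC c' := by
  simp only [Finset.mem_union, mem_posC]
  exact h.1.imp And.left And.right

theorem hornClause_res {c c' : Clause α} {p : α} (hc : HornClause c) (hc' : HornClause c')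
    (hp : p ∈ posC c ∪ posC c') : HornClause (res c c' p) := by
  rw [HornClause, posC_res, Finset.card_erase_of_mem hp, Nat.sub_le_iff_le_add]
  exact (Finset.card_union_le _ _).trans (Nat.add_le_add hc hc')

theorem hornClause_of_mem_resStep {T : Set (Clause α)} (hT : ∀ c ∈ T, HornClause c) :
    ∀ c ∈ resStep T, HornClause c := by
  rintro _ (hd | ⟨c, hc, c', hc', p, hres, rfl⟩)
  · exact hT _ hd
  · exact hornClause_res (hT c hc) (hT c' hc') hres.mem_posC_union

theorem IsHornTheory.hornClause_of_mem_resIter {T : Finset (Clause α)} (hT : IsHornTheory T)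
    (n : ℕ) : ∀ c ∈ resIter T n, HornClause c := by
  induction n with
  | zero => exact hT
  | succ n ih => exact hornClause_of_mem_resStep ih

end Horn

omit [Fintype α] in
theorem renamed_resolution_closure_horn_general
    (S : Finset (Clause α)) (V : Finset α)
    (hHorn : IsHornTheory (renTheory V S)) :
    ∀ n : ℕ, ∀ c ∈ resIter S n, HornClause (renClause V c) :=
  fun n _ hc => hHorn.hornClause_of_mem_resIter n _ (mapsTo_renClause_resIter V S n hc)

/-- If `ren(Σ,V)` is a Horn theory, then `ren(res^n_Σ, V)` is a Horn
theory for every `n ≥ 0`. -/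
theorem renamed_resolution_closure_horn
    (S : Finset (Clause α)) (V : Finset α)
    (hS : ∀ c ∈ S, IsClause c)
    (hHorn : IsHornTheory (renTheory V S)) :
    ∀ n : ℕ, ∀ c ∈ resIter S n, HornClause (renClause V c) :=
  renamed_resolution_closure_horn_general S V hHorn
end

section
/- Let Π and Σ be propositional theories and V a set of atoms. Then Σ ≡ Forget(Π, V) if and only if Σ is equivalent to the theory consisting of all formulas ψ such that Π ⊨ ψ and ψ is irrelevant to V (IR(ψ,V)). -/
variable {α : Type*} [Fintype α] [DecidableEq α]

/-! Semantically, `Forget φ V` is existential quantification over `V`: its models are the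
interpretations that agree outside `V` with some model of `φ`. A formula irrelevant to `V` cannot
distinguish interpretations agreeing outside `V`, so every `V`-irrelevant consequence of `φ` already
follows from `Forget φ V`. As `Forget φ V` is itself such a consequence, it is the strongest one. -/

namespace PropForm

variable {β : Type*} [DecidableEq β]

theorem sat_congr {I J : Set β} {φ : PropForm β} (h : ∀ q ∈ vars φ, (q ∈ I ↔ q ∈ J)) :
    Sat I φ ↔ Sat J φ := by
  induction φ with
  | var q => exact h q (Finset.mem_singleton_self q)
  | tru | fls => rfl
  | neg φ ih => exact not_congr (ih h)
  | conj φ ψ ihφ ihψ =>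
    exact and_congr (ihφ fun q hq => h q (Finset.mem_union_left _ hq))
      (ihψ fun q hq => h q (Finset.mem_union_right _ hq))
  | disj φ ψ ihφ ihψ =>
    exact or_congr (ihφ fun q hq => h q (Finset.mem_union_left _ hq))
      (ihψ fun q hq => h q (Finset.mem_union_right _ hq))

theorem IR.sat_congr {I J : Set β} {ψ : PropForm β} {V : List β} (hψ : IR ψ V)
    (hIJ : ∀ q ∉ V, (q ∈ I ↔ q ∈ J)) : Sat I ψ ↔ Sat J ψ := by
  obtain ⟨χ, hψχ, hχV⟩ := hψ
  have hχ : Sat I χ ↔ Sat J χ := PropForm.sat_congr fun q hq => hIJ q fun hqV => hχV q hqV hq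
  exact (hψχ I).trans (hχ.trans (hψχ J).symm)

theorem sat_subst (I : Set β) (p : β) (χ φ : PropForm β) :
    Sat I (subst p χ φ) ↔ Sat {q | if q = p then Sat I χ else q ∈ I} φ := by
  induction φ with
  | var q => by_cases hq : q = p <;> simp [subst, Sat, hq]
  | tru | fls => rfl
  | neg φ ih => exact not_congr ih
  | conj φ ψ ihφ ihψ => exact and_congr ihφ ihψ
  | disj φ ψ ihφ ihψ => exact or_congr ihφ ihψ

theorem vars_subst_subset (p : β) (χ φ : PropForm β) :
    vars (subst p χ φ) ⊆ (vars φ).erase p ∪ vars χ := by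
  induction φ with
  | var q => by_cases hq : q = p <;> simp [subst, vars, hq]
  | tru | fls => exact Finset.empty_subset _
  | neg _ ih => exact ih
  | conj _ _ ihφ ihψ | disj _ _ ihφ ihψ =>
    simp only [subst, vars]
    grind

theorem sat_forget1_iff (I : Set β) (φ : PropForm β) (p : β) :
    Sat I (forget1 φ p) ↔ ∃ J : Set β, Sat J φ ∧ ∀ q ≠ p, (q ∈ J ↔ q ∈ I) := by
  simp only [forget1, Sat, sat_subst]
  constructor
  · rintro (h | h) <;> exact ⟨_, h, fun q hq => by simp [hq]⟩
  · rintro ⟨J, hJ, hJI⟩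
    by_cases hp : p ∈ J
    · refine .inl ((sat_congr fun q _ => ?_).1 hJ)
      by_cases hq : q = p <;> simp [hq, hp, hJI]
    · refine .inr ((sat_congr fun q _ => ?_).1 hJ)
      by_cases hq : q = p <;> simp [hq, hp, hJI]

theorem vars_forget1_subset (φ : PropForm β) (p : β) : vars (forget1 φ p) ⊆ (vars φ).erase p := by
  have htru := vars_subst_subset p tru φ
  have hfls := vars_subst_subset p fls φ
  simp only [vars, Finset.union_empty] at htru hfls
  exact Finset.union_subset htru hfls

theorem sat_forget_iff (I : Set β) (φ : PropForm β) (V : List β) :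
    Sat I (Forget φ V) ↔ ∃ J : Set β, Sat J φ ∧ ∀ q ∉ V, (q ∈ J ↔ q ∈ I) := by
  induction V generalizing φ with
  | nil =>
    refine ⟨fun h => ⟨I, h, fun _ _ => Iff.rfl⟩, ?_⟩
    rintro ⟨J, hJ, hJI⟩
    exact (sat_congr fun q _ => hJI q List.not_mem_nil).1 hJ
  | cons p V ih =>
    simp only [Forget, ih, sat_forget1_iff]
    constructor
    · rintro ⟨J, ⟨K, hK, hKJ⟩, hJI⟩
      refine ⟨K, hK, fun q hq => ?_⟩
      rw [List.mem_cons, not_or] at hq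
      exact (hKJ q hq.1).trans (hJI q hq.2)
    · rintro ⟨K, hK, hKI⟩
      refine ⟨{q | if q ∈ V then q ∈ K else q ∈ I}, ⟨K, hK, fun q hq => ?_⟩, fun q hq => ?_⟩
      · by_cases hqV : q ∈ V
        · simp [hqV]
        · simpa [hqV] using hKI q (by simp [hq, hqV])
      · simp [hq]

theorem vars_forget_subset (φ : PropForm β) (V : List β) :
    vars (Forget φ V) ⊆ vars φ \ V.toFinset := by
  induction V generalizing φ with
  | nil => simp [Forget]
  | cons p V ih =>
    calc vars (Forget (forget1 φ p) V)
        ⊆ vars (forget1 φ p) \ V.toFinset := ih _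
      _ ⊆ (vars φ).erase p \ V.toFinset :=
          Finset.sdiff_subset_sdiff (vars_forget1_subset φ p) le_rfl
      _ = vars φ \ (p :: V).toFinset := by
          rw [List.toFinset_cons, Finset.sdiff_insert, Finset.erase_sdiff_comm]

theorem ir_forget (φ : PropForm β) (V : List β) : IR (Forget φ V) V := by
  refine ⟨Forget φ V, fun _ => Iff.rfl, fun p hpV hp => ?_⟩
  exact (Finset.mem_sdiff.1 (vars_forget_subset φ V hp)).2 (List.mem_toFinset.2 hpV)

theorem entails_forget (φ : PropForm β) (V : List β) : entails φ (Forget φ V) :=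
  fun I hI => (sat_forget_iff I φ V).2 ⟨I, hI, fun _ _ => Iff.rfl⟩

theorem IR.forget_entails {φ ψ : PropForm β} {V : List β} (hψ : IR ψ V) (h : entails φ ψ) :
    entails (Forget φ V) ψ := by
  intro I hI
  obtain ⟨J, hJ, hJI⟩ := (sat_forget_iff I φ V).1 hI
  exact (hψ.sat_congr hJI).1 (h J hJ)

theorem sat_forget_iff_forall_ir_consequence (I : Set β) (φ : PropForm β) (V : List β) :
    Sat I (Forget φ V) ↔ ∀ ψ : PropForm β, entails φ ψ → IR ψ V → Sat I ψ :=
  ⟨fun hI _ h hψ => hψ.forget_entails h I hI,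
    fun h => h _ (entails_forget φ V) (ir_forget φ V)⟩

end PropForm

theorem equiv_forget_iff_irrelevant_consequences_general {β : Type*} [DecidableEq β]
    (P S : PropForm β) (V : List β) :
    PropForm.equivalent S (PropForm.Forget P V) ↔
      ∀ I : Set β, PropForm.Sat I S ↔
        ∀ ψ : PropForm β, PropForm.entails P ψ → PropForm.IR ψ V → PropForm.Sat I ψ :=
  forall_congr' fun I => iff_congr Iff.rfl (PropForm.sat_forget_iff_forall_ir_consequence I P V)

/-- `Σ ≡ Forget(Π, V)` iff `Σ` is equivalent to the theory of all
formulas `ψ` such that `Π ⊨ ψ` and `IR(ψ,V)`. -/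
theorem equiv_forget_iff_irrelevant_consequences (P S : PropForm α) (V : List α) :
    PropForm.equivalent S (PropForm.Forget P V) ↔
      ∀ I : Set α, PropForm.Sat I S ↔
        ∀ ψ : PropForm α, PropForm.entails P ψ → PropForm.IR ψ V → PropForm.Sat I ψ :=
  equiv_forget_iff_irrelevant_consequences_general P S V
end
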